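/- Let k be a commutative ring and V a k-module, and for m, p ≥ 1 put End_V(m, p) := Hom_k(V^{⊗m}, V^{⊗p}). Then the bracket [f, g] := f ⋆ g − (−1)^{(m−p)(n−q)} g ⋆ f on ⊕_{m,p ≥ 1} End_V(m, p), graded by deg f = m − p for f ∈ End_V(m, p), is graded antisymmetric, [f, g] = −(−1)^{(m−p)(n−q)} [g, f], and satisfies the graded Jacobi identity (−1)^{(m−p)(l−r)} [[f, g], h] + (−1)^{(n−q)(m−p)} [[g, h], f] + (−1)^{(l−r)(n−q)} [[h, f], g] = 0 for all f ∈ End_V(m, p), g ∈ End_V(n, q), h ∈ End_V(l, r). -/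

import Mathlib

open scoped TensorProduct

/-- The `n`-th tensor power `V^{⊗n}` of the `k`-module `V`. -/
abbrev TP (k V : Type) [CommRing k] [AddCommGroup V] [Module k V] (n : ℕ) : Type :=
  ⨂[k] _ : Fin n, V

variable (k V : Type) [CommRing k] [AddCommGroup V] [Module k V]

/-- The canonical isomorphism `V^{⊗a} ⊗ V^{⊗b} ≅ V^{⊗(a+b)}`. -/
noncomputable def tpe (a b : ℕ) : (TP k V a ⊗[k] TP k V b) ≃ₗ[k] TP k V (a + b) :=
  (PiTensorProduct.tmulEquiv (R := k) (M := V) (ι := Fin a) (ι₂ := Fin b)).trans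
    (PiTensorProduct.reindex k (fun _ : Fin a ⊕ Fin b => V) finSumFinEquiv)

/-- The tensor product of linear maps between tensor powers, regarded as a map between
tensor powers via the canonical isomorphisms. -/
noncomputable def tmul2 {m p n q : ℕ} (f : TP k V m →ₗ[k] TP k V p)
    (g : TP k V n →ₗ[k] TP k V q) : TP k V (m + n) →ₗ[k] TP k V (p + q) :=
  (tpe k V p q).toLinearMap ∘ₗ TensorProduct.map f g ∘ₗ (tpe k V m n).symm.toLinearMap

/-- Transport of a linear map between tensor powers along equalities of the exponents. -/
def hcast {m p : ℕ} (m' p' : ℕ) (h1 : m = m') (h2 : p = p')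
    (f : TP k V m →ₗ[k] TP k V p) : TP k V m' →ₗ[k] TP k V p' := by
  subst h1; subst h2; exact f

/-- The operation `f ⋆ g := Σ_{i=1}^{m} (−1)^{(i−1)(q−n)} f ⋆_i g
+ Σ_{i=1}^{q−1} (−1)^{i(p−m)} f ⋆_{−i} g`, where
`f ⋆_i g = (f ⊗ id^{⊗(q−1)}) ∘ (id^{⊗(i−1)} ⊗ g ⊗ id^{⊗(m−i)})` for `1 ≤ i ≤ m` and
`f ⋆_{−i} g = (id^{⊗i} ⊗ f ⊗ id^{⊗(q−1−i)}) ∘ (g ⊗ id^{⊗(m−1)})` for `1 ≤ i ≤ q−1`. -/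
noncomputable def starOp {m p n q : ℕ} (hm : 1 ≤ m) (hq : 1 ≤ q)
    (f : TP k V m →ₗ[k] TP k V p) (g : TP k V n →ₗ[k] TP k V q) :
    TP k V (m + n - 1) →ₗ[k] TP k V (p + q - 1) :=
  hcast k V (m + n - 1) (p + q - 1) rfl (by omega)
    ((∑ i : Fin m, ((((i : ℕ) : ℤ) * ((q : ℤ) - (n : ℤ))).negOnePow : ℤ) •
        ((tmul2 k V f (LinearMap.id (M := TP k V (q - 1)))) ∘ₗ
          hcast k V (m + n - 1) (m + (q - 1)) (by have := i.isLt; omega)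
            (by have := i.isLt; omega)
            (tmul2 k V (tmul2 k V (LinearMap.id (M := TP k V (i : ℕ))) g)
              (LinearMap.id (M := TP k V (m - 1 - (i : ℕ)))))))
      + ∑ i : Fin (q - 1), (((((i : ℕ) : ℤ) + 1) * ((p : ℤ) - (m : ℤ))).negOnePow : ℤ) •
          hcast k V (m + n - 1) (p + (q - 1)) (by omega) rfl
            ((hcast k V (q + (m - 1)) (p + (q - 1)) (by have := i.isLt; omega)
                (by have := i.isLt; omega)
                (tmul2 k V (tmul2 k V (LinearMap.id (M := TP k V ((i : ℕ) + 1))) f)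
                  (LinearMap.id (M := TP k V (q - 1 - ((i : ℕ) + 1)))))) ∘ₗ
              tmul2 k V g (LinearMap.id (M := TP k V (m - 1)))))

/-- The bracket `[f, g] := f ⋆ g − (−1)^{(m−p)(n−q)} g ⋆ f` on `⊕_{m,p ≥ 1} End_V(m, p)`. -/
noncomputable def brkOp {m p n q : ℕ} (hm : 1 ≤ m) (hp : 1 ≤ p) (hn : 1 ≤ n) (hq : 1 ≤ q)
    (f : TP k V m →ₗ[k] TP k V p) (g : TP k V n →ₗ[k] TP k V q) :
    TP k V (m + n - 1) →ₗ[k] TP k V (p + q - 1) :=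
  starOp k V hm hq f g
    - (((((m : ℤ) - (p : ℤ)) * ((n : ℤ) - (q : ℤ))).negOnePow : ℤ) •
        hcast k V (m + n - 1) (p + q - 1) (by omega) (by omega) (starOp k V hn hp g f))

/-!
Let `s` be the shift `b ↦ id_V ⊗ b` on the endomorphisms of the tensor algebra `T(V)`, and let `f`
act on `T(V)` as `f ⊗ id`. Replace `f` by the formal sum `F = ∑ t, (-1)^{t (m - p)} s^t f` of `f`
applied at all positions. Then `f` is recovered as `F - (-1)^{m - p} s F`, and comparing terms in
the product `F G` shows that the graded commutator of `F` and `G` is the formal sum of `[f, g]`: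
the terms of `F G` in which `f` and `g` act on disjoint letters cancel against those of `G F`, and
the remaining ones are the shifts of the summands of `f ⋆ g`. So the graded Jacobi identity is that
of a graded commutator in an associative ring.
-/

local notation "sgn(" x ")" => ((Int.negOnePow x : ℤˣ) : ℤ)
local notation "τ" => TensorPower.toTensorAlgebra

/-! ### Formal sums in a ring with a shift -/

section ShiftedRing

variable {A : Type*} [Ring A]

/-- The graded commutator of elements `F` of degree `d` and `G` of degree `e`. The grading enters
only through these two integers: `A` itself is not graded. -/
def gradedCommutator (d e : ℤ) (F G : A) : A := F * G - sgn(d * e) • (G * F)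

lemma gradedCommutator_jacobi (a b c : ℤ) (F G H : A) :
    sgn(a * c) • gradedCommutator (a + b) c (gradedCommutator a b F G) H
      + sgn(b * a) • gradedCommutator (b + c) a (gradedCommutator b c G H) F
      + sgn(c * b) • gradedCommutator (c + a) b (gradedCommutator c a H F) G = 0 := by
  have hab := Int.units_coe_mul_self (a * b).negOnePow
  have hbc := Int.units_coe_mul_self (b * c).negOnePow
  have hac := Int.units_coe_mul_self (a * c).negOnePow
  simp only [gradedCommutator, add_mul, Int.negOnePow_add, Units.val_mul, mul_comm b a,
    mul_comm c a, mul_comm c b, sub_mul, mul_sub, smul_mul_assoc, mul_smul_comm, mul_assoc]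
  match_scalars <;> grind

variable (s : A →ₙ+* A)

/-- The leading term of the formal sum `F = ∑ t, (-1)^{td} s^t f`: namely `f`, in the form
`F - (-1)^d s F`, which makes sense without any notion of convergence in `A`. -/
def leadingTerm (d : ℤ) : A →+ A := .id A - sgn(d) • (s : A →+ A)

/-- The operations with `m` inputs and `p` outputs, placed at the left end. What is left of
this in `A` is that they commute with every `φ` to their right, which sits at position `m` when it
acts before the operation and at position `p` when it acts after. -/
def operations (m p : ℕ) : AddSubgroup A where
  carrier := {f | ∀ φ, s^[p] φ * f = f * s^[m] φ}
  add_mem' hf hg φ := by rw [mul_add, add_mul, hf, hg]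
  zero_mem' φ := by rw [mul_zero, zero_mul]
  neg_mem' hf φ := by rw [mul_neg, neg_mul, hf]

/-- The operation `f ⋆ g`, with `id^{⊗ i} ⊗ f` encoded as `s^[i] f`; the identity factors on the
right are not visible in `A`. Both sums are indexed from `0`. -/
def shiftStar (m p n q : ℕ) (f g : A) : A :=
  ∑ i ∈ Finset.range m, sgn(i * (q - n : ℤ)) • (f * s^[i] g)
    + ∑ i ∈ Finset.range (q - 1), sgn((i + 1) * (p - m : ℤ)) • (s^[i + 1] f * g)

/-- The bracket `f ⋆ g - (-1)^{(m-p)(n-q)} g ⋆ f` in a ring with a shift. -/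
def shiftBracket (m p n q : ℕ) (f g : A) : A :=
  shiftStar s m p n q f g - sgn((m - p : ℤ) * (n - q)) • shiftStar s n q m p g f

/-- `F` is a formal sum `∑ t, (-1)^{t(m-p)} s^t f` of the operation `f` with `m` inputs and `p`
outputs. It need not be unique, since `leadingTerm` need not be injective. -/
structure IsFormalSum (m p : ℕ) (f F : A) : Prop where
  mem_operations : f ∈ operations s m p
  leadingTerm_eq : leadingTerm s (m - p) F = f

variable {s}

lemma leadingTerm_apply (d : ℤ) (F : A) : leadingTerm s d F = F - sgn(d) • s F := rfl

lemma leadingTerm_mul (d e : ℤ) (F G : A) :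
    leadingTerm s (d + e) (F * G)
      = leadingTerm s d F * G + sgn(d) • (s F * leadingTerm s e G) := by
  simp only [leadingTerm_apply, map_mul, Int.negOnePow_add, Units.val_mul, sub_mul, mul_sub,
    smul_mul_assoc, mul_smul_comm]
  module

lemma eq_sum_leadingTerm_add (d : ℤ) (F : A) (N : ℕ) :
    F = ∑ i ∈ Finset.range N, sgn(i * d) • s^[i] (leadingTerm s d F) + sgn(N * d) • s^[N] F := by
  induction N with
  | zero => simp
  | succ N ih =>
    have peel : s^[N] F = s^[N] (leadingTerm s d F) + sgn(d) • s^[N + 1] F := by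
      rw [leadingTerm_apply, iterate_map_sub, iterate_map_zsmul, Function.iterate_succ_apply,
        sub_add_cancel]
    rw [Finset.sum_range_succ, add_assoc, Nat.cast_succ, add_one_mul, Int.negOnePow_add,
      Units.val_mul, mul_smul, ← smul_add, ← peel]
    exact ih

lemma mul_mem_operations {m p q : ℕ} {f g : A} (hf : f ∈ operations s q p)
    (hg : g ∈ operations s m q) : f * g ∈ operations s m p := fun φ => by
  rw [← mul_assoc, hf, mul_assoc, hg, mul_assoc]

lemma iterate_mem_operations {m p m' p' i : ℕ} {f : A} (hf : f ∈ operations s m p)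
    (hi : i + m ≤ m') (hdeg : m' + p = m + p') : s^[i] f ∈ operations s m' p' := by
  obtain ⟨j, rfl⟩ := Nat.exists_eq_add_of_le hi
  obtain rfl : p' = i + p + j := by omega
  intro φ
  simp only [add_assoc, Function.iterate_add_apply, ← iterate_map_mul]
  rw [hf]

lemma shiftStar_mem_operations {m p n q : ℕ} (hm : 1 ≤ m) (hq : 1 ≤ q) {f g : A}
    (hf : f ∈ operations s m p) (hg : g ∈ operations s n q) :
    shiftStar s m p n q f g ∈ operations s (m + n - 1) (p + q - 1) := by
  refine add_mem (sum_mem fun i hi => zsmul_mem ?_ _) (sum_mem fun i hi => zsmul_mem ?_ _) <;>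
    rw [Finset.mem_range] at hi
  · exact mul_mem_operations (q := m + q - 1)
      (iterate_mem_operations (i := 0) hf (by omega) (by omega))
      (iterate_mem_operations hg (by omega) (by omega))
  · exact mul_mem_operations (q := m + q - 1)
      (iterate_mem_operations hf (by omega) (by omega))
      (iterate_mem_operations (i := 0) hg (by omega) (by omega))

lemma shiftBracket_mem_operations {m p n q : ℕ} (hm : 1 ≤ m) (hp : 1 ≤ p) (hn : 1 ≤ n)
    (hq : 1 ≤ q) {f g : A} (hf : f ∈ operations s m p) (hg : g ∈ operations s n q) :
    shiftBracket s m p n q f g ∈ operations s (m + n - 1) (p + q - 1) := by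
  have hgf := shiftStar_mem_operations hn hp hg hf
  rw [add_comm n, add_comm q] at hgf
  exact sub_mem (shiftStar_mem_operations hm hq hf hg) (zsmul_mem hgf _)

lemma leadingTerm_mul_eq_shiftStar_add {m p n q : ℕ} (hq : 1 ≤ q) {f g F G : A}
    (hF : leadingTerm s (m - p) F = f) (hG : leadingTerm s (n - q) G = g) :
    leadingTerm s ((m - p) + (n - q)) (F * G)
      = shiftStar s m p n q f g + sgn(m * (n - q : ℤ)) • (f * s^[m] G)
        + sgn(q * (m - p : ℤ)) • (s^[q] F * g) := by
  have expand_right : f * G = ∑ i ∈ Finset.range m, sgn(i * (n - q : ℤ)) • (f * s^[i] g)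
      + sgn(m * (n - q : ℤ)) • (f * s^[m] G) := by
    conv_lhs => rw [eq_sum_leadingTerm_add (s := s) (n - q) G m, hG]
    simp only [mul_add, Finset.mul_sum, mul_smul_comm]
  have expand_left : sgn((m - p : ℤ)) • (s F * g)
      = ∑ i ∈ Finset.range (q - 1), sgn((i + 1) * (m - p : ℤ)) • (s^[i + 1] f * g)
        + sgn(q * (m - p : ℤ)) • (s^[q] F * g) := by
    obtain ⟨q, rfl⟩ := Nat.exists_eq_add_of_le' hq
    conv_lhs => rw [eq_sum_leadingTerm_add (s := s) (m - p) F q, hF]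
    simp only [map_add, map_sum, map_zsmul, ← Function.iterate_succ_apply' s, add_mul,
      Finset.sum_mul, smul_mul_assoc, smul_add, Finset.smul_sum, smul_smul, ← Units.val_mul,
      ← Int.negOnePow_add]
    simp only [one_mul, add_tsub_cancel_right, Nat.succ_eq_add_one, Nat.cast_succ, add_one_mul,
      add_comm (m - p : ℤ)]
  rw [leadingTerm_mul, hF, hG, expand_right, expand_left, shiftStar]
  simp only [← neg_sub (n : ℤ) q, ← neg_sub (m : ℤ) p, mul_neg, Int.negOnePow_neg]
  abel

lemma cast_add_sub_one_sub_cast {m p n q : ℕ} (hm : 1 ≤ m) (hp : 1 ≤ p) :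
    ((m + n - 1 : ℕ) - (p + q - 1 : ℕ) : ℤ) = (m - p) + (n - q) := by omega

namespace IsFormalSum

variable {m p n q l r : ℕ} {f g h F G H : A}

lemma leadingTerm_gradedCommutator (hp : 1 ≤ p) (hq : 1 ≤ q) (hF : IsFormalSum s m p f F)
    (hG : IsFormalSum s n q g G) :
    leadingTerm s ((m - p) + (n - q)) (gradedCommutator (m - p) (n - q) F G)
      = shiftBracket s m p n q f g := by
  have hFG := leadingTerm_mul_eq_shiftStar_add hq hF.leadingTerm_eq hG.leadingTerm_eq
  have hGF := leadingTerm_mul_eq_shiftStar_add hp hG.leadingTerm_eq hF.leadingTerm_eq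
  rw [hG.mem_operations F] at hFG
  rw [hF.mem_operations G, add_comm (n - q : ℤ)] at hGF
  have sign_left : sgn(m * (n - q : ℤ)) = sgn((m - p : ℤ) * (n - q)) * sgn(p * (n - q : ℤ)) := by
    rw [← Units.val_mul, ← Int.negOnePow_add]
    ring_nf
  have sign_right : sgn(q * (m - p : ℤ)) = sgn(n * (m - p : ℤ)) * sgn((m - p : ℤ) * (n - q)) := by
    rw [← Units.val_mul, ← Int.negOnePow_sub]
    ring_nf
  rw [gradedCommutator, map_sub, map_zsmul, hFG, hGF, shiftBracket, sign_left, sign_right]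
  module

lemma bracket (hm : 1 ≤ m) (hp : 1 ≤ p) (hn : 1 ≤ n) (hq : 1 ≤ q) (hF : IsFormalSum s m p f F)
    (hG : IsFormalSum s n q g G) :
    IsFormalSum s (m + n - 1) (p + q - 1) (shiftBracket s m p n q f g)
      (gradedCommutator (m - p) (n - q) F G) where
  mem_operations := shiftBracket_mem_operations hm hp hn hq hF.mem_operations hG.mem_operations
  leadingTerm_eq := by
    rw [cast_add_sub_one_sub_cast hm hp, hF.leadingTerm_gradedCommutator hp hq hG]

lemma leadingTerm_gradedCommutator_gradedCommutator (hm : 1 ≤ m) (hp : 1 ≤ p) (hn : 1 ≤ n)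
    (hq : 1 ≤ q) (hr : 1 ≤ r) (hF : IsFormalSum s m p f F) (hG : IsFormalSum s n q g G)
    (hH : IsFormalSum s l r h H) :
    leadingTerm s ((m - p) + (n - q) + (l - r))
        (gradedCommutator ((m - p) + (n - q)) (l - r) (gradedCommutator (m - p) (n - q) F G) H)
      = shiftBracket s (m + n - 1) (p + q - 1) l r (shiftBracket s m p n q f g) h := by
  rw [← (hF.bracket hm hp hn hq hG).leadingTerm_gradedCommutator (by omega) hr hH,
    cast_add_sub_one_sub_cast hm hp]

lemma shiftBracket_jacobi (hm : 1 ≤ m) (hp : 1 ≤ p) (hn : 1 ≤ n)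
    (hq : 1 ≤ q) (hl : 1 ≤ l) (hr : 1 ≤ r) (hF : IsFormalSum s m p f F)
    (hG : IsFormalSum s n q g G) (hH : IsFormalSum s l r h H) :
    sgn((m - p : ℤ) * (l - r)) •
        shiftBracket s (m + n - 1) (p + q - 1) l r (shiftBracket s m p n q f g) h
      + sgn((n - q : ℤ) * (m - p)) •
        shiftBracket s (n + l - 1) (q + r - 1) m p (shiftBracket s n q l r g h) f
      + sgn((l - r : ℤ) * (n - q)) •
        shiftBracket s (l + m - 1) (r + p - 1) n q (shiftBracket s l r m p h f) g = 0 := by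
  have rotate (a b c : ℤ) : b + c + a = a + b + c := by ring
  rw [← leadingTerm_gradedCommutator_gradedCommutator hm hp hn hq hr hF hG hH,
    ← leadingTerm_gradedCommutator_gradedCommutator hn hq hl hr hp hG hH hF,
    ← leadingTerm_gradedCommutator_gradedCommutator hl hr hm hp hq hH hF hG,
    rotate (n - q), rotate (m - p), ← map_zsmul, ← map_zsmul, ← map_zsmul, ← map_add, ← map_add,
    gradedCommutator_jacobi, map_zero]

end IsFormalSum

lemma shiftBracket_antisymm (m p n q : ℕ) (f g : A) :
    shiftBracket s m p n q f g = -(sgn((m - p : ℤ) * (n - q)) • shiftBracket s n q m p g f) := by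
  have square := Int.units_coe_mul_self ((m - p : ℤ) * (n - q)).negOnePow
  rw [shiftBracket, shiftBracket, mul_comm (n - q : ℤ), smul_sub, smul_smul, square, one_smul,
    neg_sub]

end ShiftedRing

/-! ### Operators on the tensor algebra -/

section TensorAlgebra
open TensorAlgebra

variable {R M Q : Type*} [CommRing R] [AddCommGroup M] [Module R M] [AddCommGroup Q] [Module R Q]

/-- One step of `letterRec`. As with `CliffordAlgebra.foldr'`, the word read so far is carried along
with the value, so that the recursion becomes the action of an algebra homomorphism. -/
noncomputable def letterRecAux (step : M →ₗ[R] (TensorAlgebra R M × Q) →ₗ[R] Q) :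
    M →ₗ[R] Module.End R (TensorAlgebra R M × Q) :=
  LinearMap.mk₂ R (fun v w => (ι R v * w.1, step v w)) (by simp [add_mul]) (by simp)
    (by simp [mul_add]) (by simp)

lemma letterRecAux_apply (step : M →ₗ[R] (TensorAlgebra R M × Q) →ₗ[R] Q) (v : M)
    (w : TensorAlgebra R M × Q) : letterRecAux step v w = (ι R v * w.1, step v w) := rfl

/-- Recursion on words by their first letter: the linear map sending `1` to `q₀` and `ι v * x` to
`step v (x, y)`, where `y` is the image of `x`. -/
noncomputable def letterRec (q₀ : Q) (step : M →ₗ[R] (TensorAlgebra R M × Q) →ₗ[R] Q) :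
    TensorAlgebra R M →ₗ[R] Q :=
  .snd R _ _ ∘ₗ LinearMap.applyₗ (1, q₀) ∘ₗ (lift R (letterRecAux step)).toLinearMap

lemma lift_letterRecAux_fst (step : M →ₗ[R] (TensorAlgebra R M × Q) →ₗ[R] Q)
    (x : TensorAlgebra R M) (w : TensorAlgebra R M × Q) :
    (lift R (letterRecAux step) x w).1 = x * w.1 := by
  induction x using TensorAlgebra.induction generalizing w with
  | algebraMap r => simp [Algebra.smul_def]
  | ι v => simp [letterRecAux_apply]
  | mul x y hx hy => rw [map_mul, Module.End.mul_apply, hx, hy, mul_assoc]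
  | add x y hx hy => rw [map_add, LinearMap.add_apply, Prod.fst_add, hx, hy, add_mul]

lemma letterRec_one (q₀ : Q) (step : M →ₗ[R] (TensorAlgebra R M × Q) →ₗ[R] Q) :
    letterRec q₀ step 1 = q₀ := by
  simp [letterRec]

lemma letterRec_ι_mul (q₀ : Q) (step : M →ₗ[R] (TensorAlgebra R M × Q) →ₗ[R] Q) (v : M)
    (x : TensorAlgebra R M) :
    letterRec q₀ step (ι R v * x) = step v (x, letterRec q₀ step x) := by
  have pair : lift R (letterRecAux step) x (1, q₀) = (x, letterRec q₀ step x) :=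
    Prod.ext (by rw [lift_letterRecAux_fst, mul_one]) rfl
  change (lift R (letterRecAux step) (ι R v * x) (1, q₀)).2 = _
  rw [map_mul, Module.End.mul_apply, pair, lift_ι_apply, letterRecAux_apply]

lemma linearMap_ext_ι_mul {φ ψ : TensorAlgebra R M →ₗ[R] Q} (one : φ 1 = ψ 1)
    (ι_mul : ∀ v x, φ x = ψ x → φ (ι R v * x) = ψ (ι R v * x)) : φ = ψ := by
  have mul (x y : TensorAlgebra R M) (hy : φ y = ψ y) : φ (x * y) = ψ (x * y) := by
    induction x using TensorAlgebra.induction generalizing y with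
    | algebraMap r => rw [← Algebra.smul_def, map_smul, map_smul, hy]
    | ι v => exact ι_mul v y hy
    | mul a b ha hb => rw [mul_assoc, ha _ (hb y hy)]
    | add a b ha hb => rw [add_mul, map_add, map_add, ha y hy, hb y hy]
  ext x
  simpa using mul x 1 one

/-- The map splitting off the first letter of a word. Scalars have no first letter and go to `0`. -/
noncomputable def firstLetter : TensorAlgebra R M →ₗ[R] M ⊗[R] TensorAlgebra R M :=
  letterRec 0 (LinearMap.lcomp R _ (.fst R _ _) ∘ₗ TensorProduct.mk R M (TensorAlgebra R M))

lemma firstLetter_one : firstLetter (1 : TensorAlgebra R M) = 0 := letterRec_one _ _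

lemma firstLetter_ι_mul (v : M) (x : TensorAlgebra R M) : firstLetter (ι R v * x) = v ⊗ₜ[R] x :=
  letterRec_ι_mul _ _ _ _

/-- The linear map sending `ι v * x` to `β v x` and scalars to `0`. -/
noncomputable def liftFirstLetter :
    (M →ₗ[R] TensorAlgebra R M →ₗ[R] Q) →ₗ[R] TensorAlgebra R M →ₗ[R] Q :=
  LinearMap.lcomp R Q firstLetter ∘ₗ (TensorProduct.lift.equiv (.id R) M _ Q).toLinearMap

lemma liftFirstLetter_one (β : M →ₗ[R] TensorAlgebra R M →ₗ[R] Q) : liftFirstLetter β 1 = 0 := by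
  simp [liftFirstLetter, firstLetter_one]

lemma liftFirstLetter_ι_mul (β : M →ₗ[R] TensorAlgebra R M →ₗ[R] Q) (v : M)
    (x : TensorAlgebra R M) : liftFirstLetter β (ι R v * x) = β v x := by
  simp [liftFirstLetter, firstLetter_ι_mul]

/-- The shift `φ ↦ id ⊗ φ`: `shift φ` keeps the first letter of a word and applies `φ` to the rest.
It kills scalars, hence is not unital. -/
noncomputable def shift :
    Module.End R (TensorAlgebra R M) →ₙ+* Module.End R (TensorAlgebra R M) where
  toFun φ := liftFirstLetter ((LinearMap.mul R (TensorAlgebra R M)).compl₂ φ ∘ₗ ι R)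
  map_mul' φ ψ := linearMap_ext_ι_mul (by simp [liftFirstLetter_one])
    (by simp [liftFirstLetter_ι_mul])
  map_zero' := linearMap_ext_ι_mul (by simp [liftFirstLetter_one]) (by simp [liftFirstLetter_ι_mul])
  map_add' φ ψ := linearMap_ext_ι_mul (by simp [liftFirstLetter_one])
    (by simp [liftFirstLetter_ι_mul, mul_add])

lemma shift_one (φ : Module.End R (TensorAlgebra R M)) : shift φ 1 = 0 := liftFirstLetter_one _

lemma shift_ι_mul (φ : Module.End R (TensorAlgebra R M)) (v : M) (x : TensorAlgebra R M) :
    shift φ (ι R v * x) = ι R v * φ x := liftFirstLetter_ι_mul _ _ _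

lemma tprod_succ {n : ℕ} (v : Fin (n + 1) → M) :
    tprod R M (n + 1) v = ι R (v 0) * tprod R M n (Fin.tail v) := by
  rw [tprod_apply, List.ofFn_succ, List.prod_cons]
  rfl

lemma iterate_shift_toTensorAlgebra_mul {i : ℕ} (φ : Module.End R (TensorAlgebra R M))
    (u : ⨂[R]^i M) (x : TensorAlgebra R M) : shift^[i] φ (τ u * x) = τ u * φ x := by
  induction u using PiTensorProduct.induction_on with
  | add u w hu hw => rw [map_add, add_mul, map_add, hu, hw, add_mul]
  | smul_tprod r v =>
    rw [map_smul, smul_mul_assoc, smul_mul_assoc, map_smul, TensorPower.toTensorAlgebra_tprod]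
    congr 1
    induction i with
    | zero => simp
    | succ i ih =>
      rw [tprod_succ, mul_assoc, Function.iterate_succ_apply', shift_ι_mul, ih, mul_assoc]

/-- The linear map sending `v₁ ⋯ vₘ * x` to `f (v₁, …, vₘ) x` and words with fewer than `m` letters
to `0`. -/
noncomputable def onFirstLetters : (m : ℕ) →
    MultilinearMap R (fun _ : Fin m => M) (TensorAlgebra R M →ₗ[R] Q) →ₗ[R]
      TensorAlgebra R M →ₗ[R] Q
  | 0 => (MultilinearMap.constLinearEquivOfIsEmpty R R _ _).symm.toLinearMap
  | m + 1 => liftFirstLetter ∘ₗ LinearMap.llcomp R M _ _ (onFirstLetters m) ∘ₗ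
      (multilinearCurryLeftEquiv R (fun _ : Fin (m + 1) => M) _).toLinearMap

lemma onFirstLetters_zero
    (f : MultilinearMap R (fun _ : Fin 0 => M) (TensorAlgebra R M →ₗ[R] Q)) :
    onFirstLetters 0 f = f 0 := rfl

lemma onFirstLetters_succ_one {m : ℕ}
    (f : MultilinearMap R (fun _ : Fin (m + 1) => M) (TensorAlgebra R M →ₗ[R] Q)) :
    onFirstLetters (m + 1) f 1 = 0 := liftFirstLetter_one _

lemma onFirstLetters_succ_ι_mul {m : ℕ}
    (f : MultilinearMap R (fun _ : Fin (m + 1) => M) (TensorAlgebra R M →ₗ[R] Q)) (v : M)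
    (x : TensorAlgebra R M) :
    onFirstLetters (m + 1) f (ι R v * x) = onFirstLetters m (f.curryLeft v) x :=
  liftFirstLetter_ι_mul _ _ _

lemma onFirstLetters_tprod_mul {m : ℕ}
    (f : MultilinearMap R (fun _ : Fin m => M) (TensorAlgebra R M →ₗ[R] Q)) (v : Fin m → M)
    (x : TensorAlgebra R M) : onFirstLetters m f (tprod R M m v * x) = f v x := by
  induction m with
  | zero => simp [onFirstLetters_zero, Subsingleton.elim v 0]
  | succ m ih =>
    rw [tprod_succ, mul_assoc, onFirstLetters_succ_ι_mul, ih, MultilinearMap.curryLeft_apply,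
      Fin.cons_self_tail]

lemma mul_onFirstLetters_eq {m : ℕ} {φ ψ : Module.End R (TensorAlgebra R M)}
    {f : MultilinearMap R (fun _ : Fin m => M) (Module.End R (TensorAlgebra R M))}
    (hf : ∀ v, ψ * f v = f v * φ) : ψ * onFirstLetters m f = onFirstLetters m f * shift^[m] φ := by
  induction m with
  | zero => exact hf 0
  | succ m ih =>
    refine linearMap_ext_ι_mul ?_ fun v x _ => ?_
    · simp only [Module.End.mul_apply, onFirstLetters_succ_one, map_zero,
        Function.iterate_succ_apply', shift_one]
    · simp only [Module.End.mul_apply, onFirstLetters_succ_ι_mul, Function.iterate_succ_apply',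
        shift_ι_mul]
      exact LinearMap.congr_fun (ih (f := f.curryLeft v) fun w => hf (Fin.cons v w)) x

-- `s^t f` kills the words with fewer than `t` letters, so the formal sum of `f` is locally finite:
-- its value on a word is given by recursion on the first letter.
lemma leadingTerm_shift_surjective (d : ℤ) :
    Function.Surjective (leadingTerm (shift (R := R) (M := M)) d) := fun f => by
  let step : M →ₗ[R] (TensorAlgebra R M × TensorAlgebra R M) →ₗ[R] TensorAlgebra R M :=
    ((LinearMap.mul R (TensorAlgebra R M)).compr₂ f ∘ₗ ι R).compl₂ (.fst R _ _)
      + sgn(d) • ((LinearMap.mul R (TensorAlgebra R M)) ∘ₗ ι R).compl₂ (.snd R _ _)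
  have step_apply (v x y) : step v (x, y) = f (ι R v * x) + sgn(d) • (ι R v * y) := rfl
  refine ⟨letterRec (f 1) step, linearMap_ext_ι_mul ?_ fun v x _ => ?_⟩
  · simp [leadingTerm_apply, letterRec_one, shift_one]
  · rw [leadingTerm_apply, LinearMap.sub_apply, LinearMap.smul_apply, letterRec_ι_mul, shift_ι_mul,
      step_apply, add_sub_cancel_right]

lemma toTensorAlgebra_injective {n : ℕ} :
    Function.Injective (τ : ⨂[R]^n M →ₗ[R] TensorAlgebra R M) := by
  have factor : ⇑(τ : ⨂[R]^n M →ₗ[R] TensorAlgebra R M)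
      = equivDirectSum.symm ∘ DirectSum.of (fun i => ⨂[R]^i M) n :=
    funext fun x => (DirectSum.toAddMonoid_of (fun _ => LinearMap.toAddMonoidHom τ) n x).symm
  rw [factor]
  exact equivDirectSum.symm.injective.comp (DirectSum.of_injective n)

/-- The operator `f ⊗ id` on the tensor algebra, applying `f` to the first `m` letters of a word and
killing the words with fewer than `m` letters. -/
noncomputable def tensorId {m p : ℕ} (f : ⨂[R]^m M →ₗ[R] ⨂[R]^p M) :
    Module.End R (TensorAlgebra R M) :=
  onFirstLetters m ((LinearMap.mul R _ ∘ₗ τ ∘ₗ f).compMultilinearMap (PiTensorProduct.tprod R))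

lemma tensorId_mem_operations {m p : ℕ} (f : ⨂[R]^m M →ₗ[R] ⨂[R]^p M) :
    tensorId f ∈ operations shift m p := fun φ =>
  mul_onFirstLetters_eq fun _ => LinearMap.ext fun x => iterate_shift_toTensorAlgebra_mul φ _ x

lemma exists_isFormalSum_tensorId {m p : ℕ} (f : ⨂[R]^m M →ₗ[R] ⨂[R]^p M) :
    ∃ F, IsFormalSum shift m p (tensorId f) F :=
  (leadingTerm_shift_surjective (m - p) (tensorId f)).imp fun _ hF =>
    ⟨tensorId_mem_operations f, hF⟩

/-- The operator `b` is `f ⊗ id` on the words with at least `m` letters. Nothing is required on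
shorter words, because a summand of `f ⋆ g` with idle strands, say `f ⊗ id`, is represented by the
operator representing `f`, which need not vanish on them. -/
def Represents {m p : ℕ} (b : Module.End R (TensorAlgebra R M))
    (f : ⨂[R]^m M →ₗ[R] ⨂[R]^p M) : Prop :=
  ∀ v y, b (τ v * y) = τ (f v) * y

lemma represents_tensorId {m p : ℕ} (f : ⨂[R]^m M →ₗ[R] ⨂[R]^p M) :
    Represents (tensorId f) f := fun v y => by
  induction v using PiTensorProduct.induction_on with
  | add u w hu hw => rw [map_add, add_mul, map_add, hu, hw, map_add, map_add, add_mul]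
  | smul_tprod r v =>
    simp only [map_smul, smul_mul_assoc, TensorPower.toTensorAlgebra_tprod, tensorId,
      onFirstLetters_tprod_mul]
    rfl

lemma represents_zero {m p : ℕ} :
    Represents 0 (0 : ⨂[R]^m M →ₗ[R] ⨂[R]^p M) := fun v y => by simp

namespace Represents

variable {m p q : ℕ} {b c : Module.End R (TensorAlgebra R M)}

lemma unique {f g : ⨂[R]^m M →ₗ[R] ⨂[R]^p M} (hf : Represents b f) (hg : Represents b g) :
    f = g :=
  LinearMap.ext fun v => toTensorAlgebra_injective <| by
    rw [← mul_one (τ (f v)), ← hf, hg, mul_one]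

lemma add {f g : ⨂[R]^m M →ₗ[R] ⨂[R]^p M} (hf : Represents b f) (hg : Represents c g) :
    Represents (b + c) (f + g) := fun v y => by
  simp only [LinearMap.add_apply, map_add, add_mul, hf v y, hg v y]

lemma neg {f : ⨂[R]^m M →ₗ[R] ⨂[R]^p M} (hf : Represents b f) : Represents (-b) (-f) :=
  fun v y => by simp only [LinearMap.neg_apply, map_neg, neg_mul, hf v y]

lemma sub {f g : ⨂[R]^m M →ₗ[R] ⨂[R]^p M} (hf : Represents b f) (hg : Represents c g) :
    Represents (b - c) (f - g) := by
  simpa only [sub_eq_add_neg] using hf.add hg.neg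

lemma zsmul {f : ⨂[R]^m M →ₗ[R] ⨂[R]^p M} (hf : Represents b f) (a : ℤ) :
    Represents (a • b) (a • f) := fun v y => by
  have smul_apply : (a • f) v = a • f v := map_zsmul (LinearMap.applyₗ (R := R) v) a f
  rw [LinearMap.smul_apply, smul_apply, map_zsmul, smul_mul_assoc, hf]

lemma sum {α : Type*} (t : Finset α) {b : α → Module.End R (TensorAlgebra R M)}
    {f : α → ⨂[R]^m M →ₗ[R] ⨂[R]^p M} (hf : ∀ i, Represents (b i) (f i)) :
    Represents (∑ i ∈ t, b i) (∑ i ∈ t, f i) := fun v y => by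
  simp only [LinearMap.sum_apply, map_sum, Finset.sum_mul, hf _ v y]

lemma comp {f : ⨂[R]^q M →ₗ[R] ⨂[R]^p M} {g : ⨂[R]^m M →ₗ[R] ⨂[R]^q M} (hf : Represents b f)
    (hg : Represents c g) : Represents (b * c) (f ∘ₗ g) := fun v y => by
  rw [Module.End.mul_apply, LinearMap.comp_apply, hg, hf]

end Represents

end TensorAlgebra

/-! ### Comparison with maps between tensor powers -/

section Comparison

variable {k V} {m p n q : ℕ} {b c : Module.End k (TensorAlgebra k V)} {f : TP k V m →ₗ[k] TP k V p}
  {g : TP k V n →ₗ[k] TP k V q}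

lemma toTensorAlgebra_tpe (u : TP k V m) (w : TP k V n) :
    τ (tpe k V m n (u ⊗ₜ w)) = τ u * τ w :=
  TensorPower.toTensorAlgebra_gMul u w

lemma represents_of_tpe {f : TP k V (m + n) →ₗ[k] TP k V p}
    (h : ∀ u w y, b (τ u * τ w * y) = τ (f (tpe k V m n (u ⊗ₜ w))) * y) : Represents b f := by
  intro v y
  obtain ⟨t, rfl⟩ := (tpe k V m n).surjective v
  induction t using TensorProduct.induction_on with
  | zero => simp only [map_zero, zero_mul]
  | tmul u w => rw [toTensorAlgebra_tpe, h]
  | add x z hx hz => simp only [map_add, add_mul, hx, hz]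

lemma tmul2_tpe_tmul (u : TP k V m) (w : TP k V n) :
    tmul2 k V f g (tpe k V m n (u ⊗ₜ w)) = tpe k V p q (f u ⊗ₜ g w) := by
  simp [tmul2]

namespace Represents

lemma hcast {m' p' : ℕ} (hf : Represents b f) (hm : m = m') (hp : p = p') :
    Represents b (hcast k V m' p' hm hp f) := by
  subst hm hp
  exact hf

lemma tmul_id (hf : Represents b f) (i : ℕ) :
    Represents b (tmul2 k V f (LinearMap.id (M := TP k V i))) :=
  represents_of_tpe fun u w y => by
    rw [tmul2_tpe_tmul, toTensorAlgebra_tpe, mul_assoc, hf, LinearMap.id_apply, mul_assoc]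

lemma id_tmul (hf : Represents b f) (i : ℕ) :
    Represents (shift^[i] b) (tmul2 k V (LinearMap.id (M := TP k V i)) f) :=
  represents_of_tpe fun u w y => by
    rw [tmul2_tpe_tmul, toTensorAlgebra_tpe, mul_assoc, iterate_shift_toTensorAlgebra_mul, hf,
      LinearMap.id_apply, mul_assoc]

lemma starOp (hm : 1 ≤ m) (hq : 1 ≤ q) (hf : Represents b f) (hg : Represents c g) :
    Represents (shiftStar shift m p n q b c) (starOp k V hm hq f g) := by
  rw [shiftStar, Finset.sum_range, Finset.sum_range]
  refine hcast (add (sum _ fun i => zsmul ?_ _) (sum _ fun i => zsmul ?_ _)) _ _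
  · exact (hf.tmul_id _).comp (((hg.id_tmul _).tmul_id _).hcast _ _)
  · exact ((((hf.id_tmul _).tmul_id _).hcast _ _).comp (hg.tmul_id _)).hcast _ _

lemma brkOp (hm : 1 ≤ m) (hp : 1 ≤ p) (hn : 1 ≤ n) (hq : 1 ≤ q) (hf : Represents b f)
    (hg : Represents c g) :
    Represents (shiftBracket shift m p n q b c) (brkOp k V hm hp hn hq f g) :=
  (hf.starOp hm hq hg).sub (((hg.starOp hn hp hf).hcast _ _).zsmul _)

end Represents

end Comparison

/-- the bracket `[f, g] = f ⋆ g − (−1)^{(m−p)(n−q)} g ⋆ f` on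
`⊕_{m,p ≥ 1} End_V(m,p)` (graded by `deg f = m − p`) is graded antisymmetric and satisfies
the graded Jacobi identity. -/
theorem end_bracket_graded_lie (k V : Type) [CommRing k] [AddCommGroup V] [Module k V]
    (m p n q l r : ℕ) (hm : 1 ≤ m) (hp : 1 ≤ p) (hn : 1 ≤ n) (hq : 1 ≤ q)
    (hl : 1 ≤ l) (hr : 1 ≤ r)
    (f : TP k V m →ₗ[k] TP k V p) (g : TP k V n →ₗ[k] TP k V q)
    (h : TP k V l →ₗ[k] TP k V r) :
    brkOp k V hm hp hn hq f g
        = -(((((m : ℤ) - (p : ℤ)) * ((n : ℤ) - (q : ℤ))).negOnePow : ℤ) •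
            hcast k V (m + n - 1) (p + q - 1) (by omega) (by omega)
              (brkOp k V hn hq hm hp g f))
      ∧ ((((((m : ℤ) - (p : ℤ)) * ((l : ℤ) - (r : ℤ))).negOnePow : ℤ) •
            hcast k V (m + n + l - 2) (p + q + r - 2) (by omega) (by omega)
              (brkOp k V (by omega) (by omega) hl hr (brkOp k V hm hp hn hq f g) h))
          + (((((n : ℤ) - (q : ℤ)) * ((m : ℤ) - (p : ℤ))).negOnePow : ℤ) •
              hcast k V (m + n + l - 2) (p + q + r - 2) (by omega) (by omega)
                (brkOp k V (by omega) (by omega) hm hp (brkOp k V hn hq hl hr g h) f))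
          + (((((l : ℤ) - (r : ℤ)) * ((n : ℤ) - (q : ℤ))).negOnePow : ℤ) •
              hcast k V (m + n + l - 2) (p + q + r - 2) (by omega) (by omega)
                (brkOp k V (by omega) (by omega) hn hq (brkOp k V hl hr hm hp h f) g))
        = 0) := by
  have hf := represents_tensorId f
  have hg := represents_tensorId g
  have hh := represents_tensorId h
  constructor
  · refine (hf.brkOp hm hp hn hq hg).unique ?_
    rw [shiftBracket_antisymm]
    exact (((hg.brkOp hn hq hm hp hf).hcast _ _).zsmul _).neg
  · obtain ⟨F, hF⟩ := exists_isFormalSum_tensorId f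
    obtain ⟨G, hG⟩ := exists_isFormalSum_tensorId g
    obtain ⟨H, hH⟩ := exists_isFormalSum_tensorId h
    have hfgh := (hf.brkOp hm hp hn hq hg).brkOp (by omega) (by omega) hl hr hh
    have hghf := (hg.brkOp hn hq hl hr hh).brkOp (by omega) (by omega) hm hp hf
    have hhfg := (hh.brkOp hl hr hm hp hf).brkOp (by omega) (by omega) hn hq hg
    refine Represents.unique ?_ represents_zero
    rw [← hF.shiftBracket_jacobi hm hp hn hq hl hr hG hH]
    exact (((hfgh.hcast _ _).zsmul _).add ((hghf.hcast _ _).zsmul _)).add ((hhfg.hcast _ _).zsmul _)
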